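/- Let N ≥ 2, α > 0, let Ω ⊆ ℝ^N be an exterior domain (the complement of a compact set) with smooth boundary and 0 ∉ closure(Ω), and let a ∈ C²(closure(Ω)) with a > 0 on closure(Ω) and lim_{|x|→∞} |x|^{−α} a(x) = a₀ for some a₀ > 0. Then for every ε ∈ (0,1) there exist a function A ∈ C²(ℝ^N) and constants A₁, A₂ > 0 such that: (i) (1−ε) a(x) ≤ ΔA(x) ≤ (1+ε) a(x) for all x ∈ Ω; (ii) A₁ (1+|x|²)^{(2+α)/2} ≤ A(x) ≤ A₂ (1+|x|²)^{(2+α)/2} for all x ∈ ℝ^N; (iii) |∇A(x)|² ≤ ( (2+α)/(N+α) + ε ) a(x) A(x) for all x ∈ Ω. -/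

import Mathlib

open MeasureTheory Filter

noncomputable section

/-- The Laplacian `Δφ = ∑ᵢ ∂²φ/∂xᵢ²`. -/
def lap {N : ℕ} (φ : EuclideanSpace ℝ (Fin N) → ℝ) (x : EuclideanSpace ℝ (Fin N)) : ℝ :=
  ∑ i : Fin N, fderiv ℝ (fun z => fderiv ℝ φ z (EuclideanSpace.single i 1)) x
    (EuclideanSpace.single i 1)

/-- `Ω` has a smooth boundary: near every boundary point, `Ω` is the sublevel set of a
smooth local defining function with nonvanishing differential. -/
def HasSmoothBoundary {N : ℕ} (Ω : Set (EuclideanSpace ℝ (Fin N))) : Prop :=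
  ∀ x ∈ frontier Ω, ∃ (U : Set (EuclideanSpace ℝ (Fin N)))
    (f : EuclideanSpace ℝ (Fin N) → ℝ),
    IsOpen U ∧ x ∈ U ∧ ContDiff ℝ (⊤ : ℕ∞) f ∧ fderiv ℝ f x ≠ 0 ∧
      ∀ y ∈ U, (y ∈ Ω ↔ f y < 0)

/-!
With `P = κ ⟨x⟩ ^ (2 + α)` and `κ (2 + α) (N + α) = a₀`, both `ΔP ~ a` and
`|∇P|² ≤ ((2 + α) / (N + α) + o(1)) a P` hold at infinity, so the construction can only fail on a
compact part. There `a - ΔP` is cut off to a continuous compactly supported function `f`, and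
`Δu = f` is solved up to a uniformly small error by `u = I⁻¹ f ⋆ G`, where `G` is an explicit smooth
Lipschitz function whose Laplacian is a positive integrable bump of mass `I`. The error is small
after first dilating `f` until it is nearly constant on the scale of `ΔG`. Since `u` is Lipschitz,
it is negligible against `P`, and adding a large constant to `P + u` absorbs both `u` and the
gradient on the compact part, leaving the Laplacian unchanged.
-/

open Module
open scoped Convolution Filter Laplacian Topology

section Laplacian

variable {E : Type*} [NormedAddCommGroup E] [InnerProductSpace ℝ E]

lemma laplacian_eq_sum_fderiv_fderiv [FiniteDimensional ℝ E] {ι : Type*} [Fintype ι]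
    (φ : E → ℝ) (b : OrthonormalBasis ι ℝ E) (x : E) :
    Δ φ x = ∑ i, fderiv ℝ (fderiv ℝ φ) x (b i) (b i) := by
  simp [InnerProductSpace.laplacian_eq_iteratedFDeriv_orthonormalBasis φ b,
    iteratedFDeriv_two_apply]

lemma lap_eq_laplacian {N : ℕ} {φ : EuclideanSpace ℝ (Fin N) → ℝ} (hφ : ContDiff ℝ 2 φ) :
    lap φ = Δ φ := by
  ext x
  have hφ' : DifferentiableAt ℝ (fderiv ℝ φ) x :=
    (hφ.fderiv_right (m := 1) (by norm_num)).differentiable one_ne_zero x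
  rw [laplacian_eq_sum_fderiv_fderiv φ (EuclideanSpace.basisFun (Fin N) ℝ)]
  simp [lap, fderiv_clm_apply hφ' (differentiableAt_const _)]

lemma hasFDerivAt_comp_norm_sq {h : ℝ → ℝ} {h' : ℝ} {x : E} (hh : HasDerivAt h h' (‖x‖ ^ 2)) :
    HasFDerivAt (fun z => h (‖z‖ ^ 2)) ((2 * h') • innerSL ℝ x) x := by
  refine (hh.comp_hasFDerivAt x (hasStrictFDerivAt_norm_sq x).hasFDerivAt).congr_fderiv ?_
  ext v
  simp only [smul_apply, smul_eq_mul, nsmul_eq_mul]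
  push_cast
  ring

variable [FiniteDimensional ℝ E]

lemma laplacian_comp_smul (φ : E → ℝ) (c : ℝ) (x : E) :
    Δ (fun z => φ (c • z)) x = c ^ 2 * Δ φ (c • x) := by
  have hd : fderiv ℝ (fun z => φ (c • z)) = c • fun z => fderiv ℝ φ (c • z) :=
    funext fun z => fderiv_comp_smul c
  simp only [laplacian_eq_sum_fderiv_fderiv _ (stdOrthonormalBasis ℝ E), hd, Finset.mul_sum]
  refine Finset.sum_congr rfl fun i _ => ?_
  rw [fderiv_const_smul_field (R := ℝ) (f := fun z => fderiv ℝ φ (c • z)), Pi.smul_apply,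
    fderiv_comp_smul (f := fderiv ℝ φ)]
  simp only [smul_apply, smul_eq_mul]
  ring

lemma continuous_laplacian {φ : E → ℝ} (hφ : ContDiff ℝ 2 φ) : Continuous (Δ φ) := by
  rw [funext (laplacian_eq_sum_fderiv_fderiv φ (stdOrthonormalBasis ℝ E))]
  have := (hφ.fderiv_right (m := 1) (by norm_num)).continuous_fderiv one_ne_zero
  fun_prop

lemma laplacian_of_hasFDerivAt_smul_innerSL {φ g : E → ℝ} {c : ℝ} {x : E}
    (hφ : ∀ z, HasFDerivAt φ (g z • innerSL ℝ z) z) (hg : HasFDerivAt g (c • innerSL ℝ x) x) :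
    Δ φ x = finrank ℝ E * g x + c * ‖x‖ ^ 2 := by
  have hd : fderiv ℝ φ = fun z => g z • innerSL ℝ z := funext fun z => (hφ z).fderiv
  have hdd (v : E) : fderiv ℝ (fderiv ℝ φ) x v v = g x * ‖v‖ ^ 2 + c * inner ℝ v x ^ 2 := by
    rw [hd, (hg.fun_smul (innerSL ℝ (E := E)).hasFDerivAt).fderiv]
    calc _ = g x * inner ℝ v v + c * inner ℝ x v * inner ℝ x v := rfl
      _ = _ := by rw [real_inner_self_eq_norm_sq, real_inner_comm]; ring
  simp [laplacian_eq_sum_fderiv_fderiv φ (stdOrthonormalBasis ℝ E), hdd, Finset.sum_add_distrib,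
    ← Finset.mul_sum, OrthonormalBasis.sum_sq_inner_right]

lemma laplacian_add_add_const {φ ψ : E → ℝ} (hφ : ContDiff ℝ 2 φ) (hψ : ContDiff ℝ 2 ψ) (c : ℝ)
    (x : E) : Δ (fun y => φ y + ψ y + c) x = Δ φ x + Δ ψ x := by
  refine ((hφ.add hψ).contDiffAt.laplacian_add contDiffAt_const).trans ?_
  rw [InnerProductSpace.laplacian_const, Pi.zero_apply, add_zero]
  exact hφ.contDiffAt.laplacian_add hψ.contDiffAt

end Laplacian

section BracketPow

variable {E : Type*} [NormedAddCommGroup E]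

/-- The power `⟨x⟩ ^ s` of the Japanese bracket `⟨x⟩ = (1 + ‖x‖ ^ 2) ^ (1 / 2)`. -/
def bracketPow (s : ℝ) (x : E) : ℝ :=
  (1 + ‖x‖ ^ 2) ^ (s / 2)

lemma bracketPow_pos (s : ℝ) (x : E) : 0 < bracketPow s x :=
  Real.rpow_pos_of_pos (by positivity) _

lemma bracketPow_add (s t : ℝ) (x : E) :
    bracketPow (s + t) x = bracketPow s x * bracketPow t x := by
  rw [bracketPow, add_div, Real.rpow_add (by positivity), bracketPow, bracketPow]

lemma bracketPow_zero (x : E) : bracketPow 0 x = 1 := by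
  simp [bracketPow]

lemma bracketPow_two (x : E) : bracketPow 2 x = 1 + ‖x‖ ^ 2 := by
  simp [bracketPow]

lemma bracketPow_neg_two (x : E) : bracketPow (-2) x = (1 + ‖x‖ ^ 2)⁻¹ := by
  rw [bracketPow, neg_div, div_self two_ne_zero, Real.rpow_neg_one]

lemma bracketPow_mono {s t : ℝ} (hst : s ≤ t) (x : E) : bracketPow s x ≤ bracketPow t x :=
  Real.rpow_le_rpow_of_exponent_le (by linarith [sq_nonneg ‖x‖]) (by linarith)

lemma one_le_bracketPow {s : ℝ} (hs : 0 ≤ s) (x : E) : 1 ≤ bracketPow s x :=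
  (bracketPow_zero x).symm.trans_le (bracketPow_mono hs x)

lemma norm_le_bracketPow_one (x : E) : ‖x‖ ≤ bracketPow 1 x := by
  rw [bracketPow, ← Real.sqrt_eq_rpow]
  exact Real.le_sqrt_of_sq_le (by linarith)

variable [InnerProductSpace ℝ E]

lemma contDiff_bracketPow (s : ℝ) {n : WithTop ℕ∞} : ContDiff ℝ n (bracketPow s : E → ℝ) :=
  (contDiff_const.add (contDiff_norm_sq ℝ)).rpow_const_of_ne fun x => by positivity

lemma hasFDerivAt_bracketPow (s : ℝ) (x : E) :
    HasFDerivAt (bracketPow s) ((s * bracketPow (s - 2) x) • innerSL ℝ x) x := by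
  have h : HasDerivAt (fun t : ℝ => (1 + t) ^ (s / 2)) (s / 2 * bracketPow (s - 2) x)
      (‖x‖ ^ 2) := by
    have := ((hasDerivAt_id (‖x‖ ^ 2)).const_add 1).rpow_const (p := s / 2)
      (Or.inl (by simp only [id]; positivity))
    rwa [one_mul, ← sub_add_cancel (s / 2) 1, add_sub_cancel_right, sub_add_cancel,
      show s / 2 - 1 = (s - 2) / 2 by ring] at this
  refine (hasFDerivAt_comp_norm_sq h).congr_fderiv ?_
  rw [← mul_assoc, mul_div_cancel₀ s two_ne_zero]

lemma norm_fderiv_bracketPow_sq_le (s : ℝ) (x : E) :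
    ‖fderiv ℝ (bracketPow s) x‖ ^ 2 ≤ s ^ 2 * bracketPow (s - 2) x * bracketPow s x := by
  have hadd : bracketPow s x = bracketPow (s - 2) x * bracketPow 2 x := by
    rw [← bracketPow_add, sub_add_cancel]
  rw [(hasFDerivAt_bracketPow s x).fderiv, norm_smul, innerSL_apply_norm, hadd, bracketPow_two,
    Real.norm_eq_abs, mul_pow, sq_abs]
  nlinarith [mul_nonneg (sq_nonneg s) (sq_nonneg (bracketPow (s - 2) x))]

variable [FiniteDimensional ℝ E]

lemma laplacian_bracketPow (s : ℝ) (x : E) :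
    Δ (bracketPow s : E → ℝ) x =
      s * bracketPow (s - 2) x * (finrank ℝ E + (s - 2) - (s - 2) * bracketPow (-2) x) := by
  have hd : HasFDerivAt (fun z : E => s * bracketPow (s - 2) z)
      ((s * ((s - 2) * bracketPow (s - 2 - 2) x)) • innerSL ℝ x) x := by
    simpa only [smul_smul] using (hasFDerivAt_bracketPow (s - 2) x).const_mul s
  rw [laplacian_of_hasFDerivAt_smul_innerSL (hasFDerivAt_bracketPow s) hd, sub_eq_add_neg (s - 2),
    bracketPow_add, bracketPow_neg_two]
  field_simp
  ring

lemma integrable_bracketPow_neg [MeasurableSpace E] [BorelSpace E] {s : ℝ}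
    (hs : finrank ℝ E < s) : Integrable (bracketPow (-s) : E → ℝ) :=
  integrable_rpow_neg_one_add_norm_sq hs

end BracketPow

section Convolution

variable {E : Type*} [NormedAddCommGroup E] [InnerProductSpace ℝ E] [FiniteDimensional ℝ E]
  [MeasurableSpace E] [BorelSpace E] {F : Type*} [NormedAddCommGroup F] [NormedSpace ℝ F]
  {f : E → ℝ}

lemma integrable_smul_comp_sub (hf : Continuous f) (hfc : HasCompactSupport f) {G : E → F}
    (hG : Continuous G) (x : E) : Integrable fun t => f t • G (x - t) :=
  hfc.convolutionExists_left_of_continuous_right (ContinuousLinearMap.lsmul ℝ ℝ)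
    hf.locallyIntegrable hG x

lemma continuous_convolution_left (hf : Continuous f) (hfc : HasCompactSupport f) {G : E → F}
    (hG : Continuous G) : Continuous (f ⋆ G) :=
  hfc.continuous_convolution_left _ hf hG.locallyIntegrable

lemma hasFDerivAt_convolution (hf : Continuous f) (hfc : HasCompactSupport f) {G : E → F}
    (hG : ContDiff ℝ 1 G) (x : E) : HasFDerivAt (f ⋆ G) ((f ⋆ fderiv ℝ G) x) x := by
  have hG' : Continuous (fderiv ℝ G) := hG.continuous_fderiv one_ne_zero
  obtain ⟨M, hM⟩ := ((isCompact_closedBall x 1).prod hfc.isCompact).exists_bound_of_continuousOn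
    (f := fun p : E × E => f p.2 • fderiv ℝ G (p.1 - p.2)) (by fun_prop)
  refine hasFDerivAt_integral_of_dominated_of_fderiv_le
    (F' := fun z t => f t • fderiv ℝ G (z - t)) (bound := (tsupport f).indicator fun _ => M)
    (Metric.closedBall_mem_nhds x one_pos)
    (Eventually.of_forall fun z => (integrable_smul_comp_sub hf hfc hG.continuous z).1)
    (integrable_smul_comp_sub hf hfc hG.continuous x)
    (integrable_smul_comp_sub hf hfc hG' x).1 (ae_of_all _ fun t z hz => ?_) ?_
    (ae_of_all _ fun t z _ => ?_)
  · by_cases ht : t ∈ tsupport f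
    · simpa only [Set.indicator_of_mem ht] using hM (z, t) ⟨hz, ht⟩
    · simp [ht, image_eq_zero_of_notMem_tsupport ht]
  · exact (integrable_indicator_iff hfc.isCompact.measurableSet).2
      (integrableOn_const hfc.isCompact.measure_lt_top.ne)
  · exact ((hG.differentiable one_ne_zero (z - t)).hasFDerivAt.comp z
      ((hasFDerivAt_id z).sub_const t)).const_smul (f t)

lemma fderiv_convolution (hf : Continuous f) (hfc : HasCompactSupport f) {G : E → F}
    (hG : ContDiff ℝ 1 G) : fderiv ℝ (f ⋆ G) = f ⋆ fderiv ℝ G :=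
  funext fun x => (hasFDerivAt_convolution hf hfc hG x).fderiv

lemma contDiff_one_convolution (hf : Continuous f) (hfc : HasCompactSupport f) {G : E → F}
    (hG : ContDiff ℝ 1 G) : ContDiff ℝ 1 (f ⋆ G) := by
  rw [contDiff_one_iff_fderiv, fderiv_convolution hf hfc hG]
  exact ⟨fun x => (hasFDerivAt_convolution hf hfc hG x).differentiableAt,
    continuous_convolution_left hf hfc (hG.continuous_fderiv one_ne_zero)⟩

lemma contDiff_two_convolution (hf : Continuous f) (hfc : HasCompactSupport f) {G : E → F}
    (hG : ContDiff ℝ 2 G) : ContDiff ℝ 2 (f ⋆ G) := by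
  have hG₁ : ContDiff ℝ 1 G := hG.of_le one_le_two
  rw [← one_add_one_eq_two, contDiff_succ_iff_fderiv, fderiv_convolution hf hfc hG₁]
  exact ⟨fun x => (hasFDerivAt_convolution hf hfc hG₁ x).differentiableAt, by simp,
    contDiff_one_convolution hf hfc (hG.fderiv_right (m := 1) (by norm_num))⟩

lemma laplacian_convolution (hf : Continuous f) (hfc : HasCompactSupport f) {G : E → ℝ}
    (hG : ContDiff ℝ 2 G) : Δ (f ⋆ G) = f ⋆ Δ G := by
  have hG' : ContDiff ℝ 1 (fderiv ℝ G) := hG.fderiv_right (by norm_num)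
  have hG'' : Continuous (fderiv ℝ (fderiv ℝ G)) := hG'.continuous_fderiv one_ne_zero
  ext x
  simp only [laplacian_eq_sum_fderiv_fderiv _ (stdOrthonormalBasis ℝ E), convolution_lsmul,
    fderiv_convolution hf hfc (hG.of_le one_le_two), fderiv_convolution hf hfc hG',
    Finset.smul_sum]
  rw [integral_finsetSum _ fun i _ => integrable_smul_comp_sub hf hfc
    (G := fun z => fderiv ℝ (fderiv ℝ G) z _ _) (by fun_prop) x]
  have hint := integrable_smul_comp_sub hf hfc (G := fderiv ℝ (fderiv ℝ G)) hG'' x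
  refine Finset.sum_congr rfl fun i _ => ?_
  rw [ContinuousLinearMap.integral_apply hint,
    ContinuousLinearMap.integral_apply (hint.apply_continuousLinearMap _)]
  rfl

lemma lipschitzWith_convolution (hf : Continuous f) (hfc : HasCompactSupport f) {G : E → F}
    {K : NNReal} (hG : LipschitzWith K G) :
    LipschitzWith (K * ∫ t, |f t|).toNNReal (f ⋆ G) := by
  refine LipschitzWith.of_dist_le' fun x y => ?_
  have hint := integrable_smul_comp_sub hf hfc hG.continuous
  have hfi : Integrable fun t => |f t| := (hf.integrable_of_hasCompactSupport hfc).abs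
  rw [dist_eq_norm, convolution_lsmul, convolution_lsmul, ← integral_sub (hint x) (hint y),
    mul_right_comm, ← integral_const_mul]
  refine norm_integral_le_of_norm_le (hfi.const_mul _) (ae_of_all _ fun t => ?_)
  rw [← smul_sub, norm_smul, Real.norm_eq_abs, mul_comm, ← dist_eq_norm]
  gcongr
  simpa only [dist_sub_right] using hG.dist_le_mul (x - t) (y - t)

lemma abs_convolution_sub_mul_integral_le {g φ : E → ℝ} (hg : Continuous g) {η L : ℝ}
    (hgL : ∀ x y, |g x - g y| ≤ η + L * ‖x - y‖) (hφ0 : ∀ x, 0 ≤ φ x) (hφ : Integrable φ)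
    (hφ' : Integrable fun x => φ x * ‖x‖) (x : E) :
    |(g ⋆ φ) x - g x * ∫ t, φ t| ≤ η * (∫ t, φ t) + L * ∫ t, φ t * ‖t‖ := by
  have hbound (t) : ‖(g (x - t) - g x) * φ t‖ ≤ η * φ t + L * (φ t * ‖t‖) := by
    have := hgL (x - t) x
    rw [sub_sub_cancel_left, norm_neg] at this
    rw [norm_mul, Real.norm_of_nonneg (hφ0 t)]
    exact (mul_le_mul_of_nonneg_right this (hφ0 t)).trans_eq (by ring)
  have hmaj : Integrable fun t => η * φ t + L * (φ t * ‖t‖) :=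
    (hφ.const_mul η).add (hφ'.const_mul L)
  have hint : Integrable fun t => (g (x - t) - g x) * φ t :=
    hmaj.mono' ((by fun_prop : Continuous fun t => g (x - t) - g x).aestronglyMeasurable.mul hφ.1)
      (ae_of_all _ hbound)
  have hsub : (g ⋆ φ) x - g x * ∫ t, φ t = ∫ t, (g (x - t) - g x) * φ t := by
    rw [convolution_lsmul_swap, sub_eq_iff_eq_add, ← integral_const_mul,
      ← integral_add hint (hφ.const_mul _)]
    simp only [sub_mul, sub_add_cancel, smul_eq_mul]
  rw [hsub, ← Real.norm_eq_abs, ← integral_const_mul, ← integral_const_mul,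
    ← integral_add (hφ.const_mul η) (hφ'.const_mul L)]
  exact norm_integral_le_of_norm_le hmaj (ae_of_all _ hbound)

end Convolution

section RegKernel

variable {E : Type*} [NormedAddCommGroup E] [InnerProductSpace ℝ E]

/-- A regularization of the fundamental solution of the Laplacian: the radial function with
gradient `⟨x⟩ ^ (-n) • x`, where `n = dim E`. Its Laplacian is a positive integrable density. -/
def regKernel (x : E) : ℝ :=
  2⁻¹ * ∫ t in (0 : ℝ)..‖x‖ ^ 2, (1 + t) ^ (-(finrank ℝ E : ℝ) / 2)

lemma hasDerivAt_integral_one_add_rpow (p : ℝ) {s : ℝ} (hs : 0 ≤ s) :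
    HasDerivAt (fun s => ∫ t in (0 : ℝ)..s, (1 + t) ^ p) ((1 + s) ^ p) s := by
  have hcont {t : ℝ} (ht : 0 ≤ t) : ContinuousAt (fun t : ℝ => (1 + t) ^ p) t :=
    (by fun_prop : ContinuousAt (fun t : ℝ => 1 + t) t).rpow_const (Or.inl (by positivity))
  have hmeas : Measurable fun t : ℝ => (1 + t) ^ p := by fun_prop
  refine intervalIntegral.integral_hasDerivAt_right (ContinuousOn.intervalIntegrable ?_)
    hmeas.stronglyMeasurable.stronglyMeasurableAtFilter (hcont hs)
  rw [Set.uIcc_of_le hs]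
  exact fun t ht => (hcont ht.1).continuousWithinAt

lemma hasFDerivAt_regKernel (x : E) :
    HasFDerivAt regKernel (bracketPow (-finrank ℝ E) x • innerSL ℝ x) x := by
  have h := (hasDerivAt_integral_one_add_rpow (-(finrank ℝ E : ℝ) / 2)
    (sq_nonneg ‖x‖)).const_mul 2⁻¹
  refine (hasFDerivAt_comp_norm_sq h).congr_fderiv ?_
  rw [mul_inv_cancel_left₀ two_ne_zero, bracketPow]

lemma contDiff_regKernel : ContDiff ℝ 2 (regKernel : E → ℝ) := by
  rw [← one_add_one_eq_two, contDiff_succ_iff_fderiv,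
    funext fun x : E => (hasFDerivAt_regKernel x).fderiv]
  exact ⟨fun x => (hasFDerivAt_regKernel x).differentiableAt, by simp,
    (contDiff_bracketPow _).smul (innerSL ℝ).contDiff⟩

variable [FiniteDimensional ℝ E]

lemma laplacian_regKernel (x : E) :
    Δ (regKernel : E → ℝ) x = finrank ℝ E * bracketPow (-(finrank ℝ E + 2)) x := by
  rw [laplacian_of_hasFDerivAt_smul_innerSL hasFDerivAt_regKernel (hasFDerivAt_bracketPow _ x),
    show -(finrank ℝ E : ℝ) = -(finrank ℝ E + 2) + 2 by ring, bracketPow_add, bracketPow_two,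
    add_sub_cancel_right]
  ring

lemma laplacian_regKernel_nonneg (x : E) : 0 ≤ Δ (regKernel : E → ℝ) x := by
  rw [laplacian_regKernel]
  exact mul_nonneg (Nat.cast_nonneg _) (bracketPow_pos _ x).le

lemma lipschitzWith_regKernel [Nontrivial E] : LipschitzWith 1 (regKernel : E → ℝ) := by
  refine lipschitzWith_of_nnnorm_fderiv_le (𝕜 := ℝ)
    (contDiff_regKernel.differentiable two_ne_zero) fun x => ?_
  have hn : (1 : ℝ) ≤ finrank ℝ E := by exact_mod_cast finrank_pos (R := ℝ) (M := E)
  rw [← NNReal.coe_le_coe, coe_nnnorm, (hasFDerivAt_regKernel x).fderiv, norm_smul,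
    innerSL_apply_norm, Real.norm_of_nonneg (bracketPow_pos _ x).le, NNReal.coe_one]
  calc bracketPow (-finrank ℝ E) x * ‖x‖ ≤ bracketPow (-1) x * bracketPow 1 x := by
        gcongr
        exacts [(bracketPow_pos _ x).le, bracketPow_mono (by linarith) x, norm_le_bracketPow_one x]
    _ = 1 := by rw [← bracketPow_add, neg_add_cancel, bracketPow_zero]

variable [MeasurableSpace E] [BorelSpace E]

lemma integrable_laplacian_regKernel : Integrable (Δ (regKernel : E → ℝ)) := by
  rw [funext laplacian_regKernel]
  exact (integrable_bracketPow_neg (by linarith)).const_mul _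

lemma integrable_laplacian_regKernel_mul_norm :
    Integrable fun x : E => Δ (regKernel : E → ℝ) x * ‖x‖ := by
  have hint : Integrable fun x : E => finrank ℝ E * bracketPow (-(finrank ℝ E + 1)) x :=
    (integrable_bracketPow_neg (by linarith)).const_mul _
  refine hint.mono' (integrable_laplacian_regKernel.1.mul continuous_norm.aestronglyMeasurable)
    (ae_of_all _ fun x => ?_)
  rw [norm_mul, norm_norm, Real.norm_of_nonneg (laplacian_regKernel_nonneg x), laplacian_regKernel,
    show -(finrank ℝ E + 1 : ℝ) = -(finrank ℝ E + 2) + 1 by ring, bracketPow_add, mul_assoc]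
  have := (bracketPow_pos (-(finrank ℝ E + 2)) x).le
  gcongr
  exact norm_le_bracketPow_one x

lemma integral_laplacian_regKernel_pos [Nontrivial E] :
    0 < ∫ x : E, Δ (regKernel : E → ℝ) x := by
  have hpos (x : E) : 0 < Δ (regKernel : E → ℝ) x := by
    rw [laplacian_regKernel]
    exact mul_pos (by exact_mod_cast finrank_pos (R := ℝ) (M := E)) (bracketPow_pos _ x)
  rw [integral_pos_iff_support_of_nonneg laplacian_regKernel_nonneg integrable_laplacian_regKernel,
    Function.support_eq_univ fun x => (hpos x).ne']
  exact Measure.measure_univ_pos.2 (NeZero.ne _)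

end RegKernel

section ClosedSet

variable {X : Type*} [TopologicalSpace X] {F : Set X}

lemma eventually_cocompact_inf_principal {p : X → Prop} :
    (∀ᶠ x in cocompact X ⊓ 𝓟 F, p x) ↔ ∃ K, IsCompact K ∧ ∀ x ∈ F, x ∉ K → p x := by
  rw [(hasBasis_cocompact.inf_principal F).eventually_iff]
  simp only [Set.mem_inter_iff, Set.mem_compl_iff, and_imp]
  exact exists_congr fun K => and_congr_right fun _ => forall_congr' fun x => forall_comm

lemma exists_pos_forall_le_of_eventually_le (hF : IsClosed F) {a : X → ℝ} (ha : ContinuousOn a F)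
    (hpos : ∀ x ∈ F, 0 < a x) {m : ℝ} (hm : 0 < m)
    (hma : ∀ᶠ x in cocompact X ⊓ 𝓟 F, m ≤ a x) : ∃ c, 0 < c ∧ ∀ x ∈ F, c ≤ a x := by
  obtain ⟨K, hK, hKa⟩ := eventually_cocompact_inf_principal.1 hma
  obtain ⟨c, hc, hca⟩ := (hK.inter_left hF).exists_forall_le' (ha.mono Set.inter_subset_left)
    (a := 0) fun x hx => hpos x hx.1
  refine ⟨min c m, lt_min hc hm, fun x hx => ?_⟩
  by_cases hxK : x ∈ K
  · exact (min_le_left _ _).trans (hca x ⟨hx, hxK⟩)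
  · exact (min_le_right _ _).trans (hKa x hx hxK)

lemma exists_nonneg_forall_le_of_eventually_nonpos (hF : IsClosed F) {h : X → ℝ}
    (hh : ContinuousOn h F) (hh0 : ∀ᶠ x in cocompact X ⊓ 𝓟 F, h x ≤ 0) :
    ∃ M, 0 ≤ M ∧ ∀ x ∈ F, h x ≤ M := by
  obtain ⟨K, hK, hKh⟩ := eventually_cocompact_inf_principal.1 hh0
  obtain ⟨M, hM⟩ := (hK.inter_left hF).bddAbove_image (hh.mono Set.inter_subset_left)
  refine ⟨max M 0, le_max_right _ _, fun x hx => ?_⟩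
  by_cases hxK : x ∈ K
  · exact (hM (Set.mem_image_of_mem h ⟨hx, hxK⟩)).trans (le_max_left _ _)
  · exact (hKh x hx hxK).trans (le_max_right _ _)

lemma exists_hasCompactSupport_approx [T4Space X] [LocallyCompactSpace X] (hF : IsClosed F)
    {h : X → ℝ} (hh : ContinuousOn h F) {K : Set X} (hK : IsCompact K) :
    ∃ f : X → ℝ, Continuous f ∧ HasCompactSupport f ∧
      (∀ x ∈ F, x ∈ K → f x = h x) ∧ ∀ x ∈ F, |h x - f x| ≤ |h x| := by
  obtain ⟨g, hg⟩ := ContinuousMap.exists_restrict_eq hF ⟨F.domRestrict h, hh.domRestrict⟩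
  have hgh (x) (hx : x ∈ F) : g x = h x := DFunLike.congr_fun hg ⟨x, hx⟩
  obtain ⟨χ, hχ, -, hχc, hχ01⟩ :=
    exists_continuous_one_zero_of_isCompact hK isClosed_empty (Set.disjoint_empty K)
  refine ⟨χ * g, by fun_prop, hχc.mul_right, fun x hx hxK => ?_, fun x hx => ?_⟩
  · rw [Pi.mul_apply, hχ hxK, Pi.one_apply, one_mul, hgh x hx]
  · have hχx := hχ01 x
    rw [Pi.mul_apply, hgh x hx, ← one_sub_mul, abs_mul, abs_of_nonneg (by linarith [hχx.2])]
    exact mul_le_of_le_one_left (abs_nonneg _) (by linarith [hχx.1])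

end ClosedSet

section Poisson

lemma exists_abs_sub_le_add_mul_norm {E : Type*} [NormedAddCommGroup E] {f : E → ℝ}
    (hf : Continuous f) (hfc : HasCompactSupport f) {η : ℝ} (hη : 0 < η) :
    ∃ L, 0 ≤ L ∧ ∀ x y, |f x - f y| ≤ η + L * ‖x - y‖ := by
  obtain ⟨d, hd, hfd⟩ := Metric.uniformContinuous_iff.1
    (hfc.uniformContinuous_of_continuous hf) η hη
  obtain ⟨M, hM⟩ := hfc.exists_bound_of_continuous hf
  have hM0 : 0 ≤ M := (norm_nonneg _).trans (hM 0)
  refine ⟨2 * M / d, by positivity, fun x y => ?_⟩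
  rcases lt_or_ge ‖x - y‖ d with hnear | hfar
  · have hxy : |f x - f y| < η := hfd (by rwa [dist_eq_norm])
    have : 0 ≤ 2 * M / d * ‖x - y‖ := by positivity
    linarith
  · calc |f x - f y| ≤ |f x| + |f y| := abs_sub _ _
      _ ≤ 2 * M := by linarith [hM x, hM y, Real.norm_eq_abs (f x), Real.norm_eq_abs (f y)]
      _ = 2 * M / d * d := by field_simp
      _ ≤ 2 * M / d * ‖x - y‖ := by gcongr
      _ ≤ η + 2 * M / d * ‖x - y‖ := by linarith

variable {E : Type*} [NormedAddCommGroup E] [InnerProductSpace ℝ E] [FiniteDimensional ℝ E]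
  [Nontrivial E]

variable (E) in
lemma exists_laplacian_approx_of_modulus :
    ∃ C, 0 ≤ C ∧ ∀ (g : E → ℝ) (η L : ℝ), Continuous g → HasCompactSupport g →
      (∀ x y, |g x - g y| ≤ η + L * ‖x - y‖) →
      ∃ (u : E → ℝ) (K : NNReal), ContDiff ℝ 2 u ∧ LipschitzWith K u ∧
        ∀ x, |Δ u x - g x| ≤ η + L * C := by
  borelize E
  set I := ∫ x : E, Δ (regKernel : E → ℝ) x
  set J := ∫ x : E, Δ (regKernel : E → ℝ) x * ‖x‖
  have hI : 0 < I := integral_laplacian_regKernel_pos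
  have hJ : 0 ≤ J :=
    integral_nonneg fun x => mul_nonneg (laplacian_regKernel_nonneg x) (norm_nonneg x)
  refine ⟨J / I, by positivity, fun g η L hg hgc hgL => ?_⟩
  have hsmooth : ContDiff ℝ 2 (g ⋆ regKernel) := contDiff_two_convolution hg hgc contDiff_regKernel
  refine ⟨I⁻¹ • (g ⋆ regKernel), _, hsmooth.const_smul I⁻¹, (lipschitzWith_smul I⁻¹).comp
    (lipschitzWith_convolution hg hgc lipschitzWith_regKernel), fun x => ?_⟩
  have herr : |(g ⋆ Δ regKernel) x - g x * I| ≤ η * I + L * J :=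
    abs_convolution_sub_mul_integral_le hg hgL laplacian_regKernel_nonneg
      integrable_laplacian_regKernel integrable_laplacian_regKernel_mul_norm x
  rw [InnerProductSpace.laplacian_smul _ hsmooth.contDiffAt,
    laplacian_convolution hg hgc contDiff_regKernel, smul_eq_mul]
  calc |I⁻¹ * (g ⋆ Δ regKernel) x - g x| = |(g ⋆ Δ regKernel) x - g x * I| / I := by
        rw [← abs_of_pos hI, ← abs_div, abs_of_pos hI]
        field_simp
    _ ≤ (η * I + L * J) / I := by gcongr
    _ = η + L * (J / I) := by field_simp

lemma exists_laplacian_approx {f : E → ℝ} (hf : Continuous f) (hfc : HasCompactSupport f)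
    {η : ℝ} (hη : 0 < η) :
    ∃ (u : E → ℝ) (K : NNReal), ContDiff ℝ 2 u ∧ LipschitzWith K u ∧
      ∀ x, |Δ u x - f x| ≤ η := by
  obtain ⟨C, hC, happrox⟩ := exists_laplacian_approx_of_modulus E
  obtain ⟨L, hL, hfL⟩ := exists_abs_sub_le_add_mul_norm hf hfc (half_pos hη)
  obtain ⟨δ, hδ, hδC⟩ : ∃ δ : ℝ, 0 < δ ∧ L * δ * C ≤ η / 2 := by
    refine ⟨η / 2 / (L * C + 1), by positivity, ?_⟩
    rw [mul_div_assoc', div_mul_eq_mul_div, div_le_iff₀ (by positivity)]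
    linarith
  obtain ⟨w, K, hw, hwK, hwf⟩ := happrox (fun x => f (δ • x)) (η / 2) (L * δ) (by fun_prop)
    (hfc.comp_homeomorph (Homeomorph.smulOfNeZero δ hδ.ne')) fun x y => by
      simpa [← smul_sub, norm_smul, abs_of_pos hδ, mul_assoc] using hfL (δ • x) (δ • y)
  have hsmooth : ContDiff ℝ 2 fun x => w (δ⁻¹ • x) := hw.comp (contDiff_id.const_smul δ⁻¹)
  refine ⟨δ ^ 2 • fun x => w (δ⁻¹ • x), _, hsmooth.const_smul (δ ^ 2),
    (lipschitzWith_smul (δ ^ 2)).comp (hwK.comp (lipschitzWith_smul δ⁻¹)), fun x => ?_⟩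
  have := hwf (δ⁻¹ • x)
  rw [smul_inv_smul₀ hδ.ne'] at this
  rw [InnerProductSpace.laplacian_smul _ hsmooth.contDiffAt, laplacian_comp_smul, smul_eq_mul,
    ← mul_assoc, ← mul_pow, mul_inv_cancel₀ hδ.ne', one_pow, one_mul]
  linarith

lemma exists_laplacian_approx_of_eventually {F : Set E} (hF : IsClosed F) {h b : E → ℝ}
    (hh : ContinuousOn h F) {c : ℝ} (hc : 0 < c) (hb : ∀ x ∈ F, c ≤ b x)
    (hhb : ∀ᶠ x in cocompact E ⊓ 𝓟 F, |h x| ≤ b x) :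
    ∃ (u : E → ℝ) (K : NNReal), ContDiff ℝ 2 u ∧ LipschitzWith K u ∧
      ∀ x ∈ F, |h x - Δ u x| ≤ 2 * b x := by
  obtain ⟨S, hS, hSb⟩ := eventually_cocompact_inf_principal.1 hhb
  obtain ⟨f, hf, hfc, hfS, hfh⟩ := exists_hasCompactSupport_approx hF hh hS
  obtain ⟨u, K, hu, huK, huf⟩ := exists_laplacian_approx hf hfc hc
  refine ⟨u, K, hu, huK, fun x hx => ?_⟩
  have hhf : |h x - f x| ≤ b x := by
    by_cases hxS : x ∈ S
    · rw [hfS x hx hxS, sub_self, abs_zero]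
      exact hc.le.trans (hb x hx)
    · exact (hfh x hx).trans (hSb x hx hxS)
  calc |h x - Δ u x| ≤ |h x - f x| + |f x - Δ u x| := abs_sub_le _ _ _
    _ ≤ b x + c := by
      gcongr
      rw [abs_sub_comm]
      exact huf x
    _ ≤ 2 * b x := by linarith [hb x hx]

end Poisson

section Asymptotics

lemma eventually_abs_sub_le_mul {X : Type*} {l : Filter X} {w f g : X → ℝ} {L σ : ℝ}
    (hw : ∀ x, 0 < w x) (hf : Tendsto (fun x => w x * f x) l (𝓝 L))
    (hg : Tendsto (fun x => w x * g x) l (𝓝 L)) (hL : 0 < L) (hσ : 0 < σ) :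
    ∀ᶠ x in l, |f x - g x| ≤ σ * f x := by
  have hlt : |L - L| < σ * L := by
    rw [sub_self, abs_zero]
    positivity
  filter_upwards [(hf.sub hg).abs.eventually_lt (hf.const_mul σ) hlt] with x hx
  rw [← mul_sub, abs_mul, abs_of_pos (hw x), mul_left_comm] at hx
  exact (lt_of_mul_lt_mul_left hx (hw x).le).le

variable {E : Type*} [NormedAddCommGroup E] {α a₀ : ℝ} {a : E → ℝ} {l : Filter E}

lemma eventually_half_le_of_tendsto_bracketPow_neg_mul (hα : 0 ≤ α) (ha₀ : 0 < a₀)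
    (ha : Tendsto (fun x => bracketPow (-α) x * a x) l (𝓝 a₀)) : ∀ᶠ x in l, a₀ / 2 ≤ a x := by
  filter_upwards [ha.eventually_const_lt (half_lt_self ha₀)] with x hx
  have hax : 0 < a x :=
    pos_of_mul_pos_right ((half_pos ha₀).trans hx) (bracketPow_pos (-α) x).le
  have hw : bracketPow (-α) x ≤ 1 :=
    (bracketPow_mono (by linarith) x).trans_eq (bracketPow_zero x)
  exact hx.le.trans (mul_le_of_le_one_left hax.le hw)

section Proper

variable [ProperSpace E]

lemma tendsto_bracketPow_neg_two_cocompact :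
    Tendsto (bracketPow (-2) : E → ℝ) (cocompact E) (𝓝 0) := by
  rw [funext (bracketPow_neg_two (E := E))]
  exact (tendsto_atTop_add_const_left _ _ ((tendsto_pow_atTop two_ne_zero).comp
    (tendsto_norm_cocompact_atTop (E := E)))).inv_tendsto_atTop

lemma tendsto_bracketPow_neg_mul (hl : l ≤ cocompact E)
    (ha : Tendsto (fun x => ‖x‖ ^ (-α) * a x) l (𝓝 a₀)) :
    Tendsto (fun x => bracketPow (-α) x * a x) l (𝓝 a₀) := by
  have hratio : Tendsto (fun x : E => (1 - bracketPow (-2) x) ^ (α / 2)) l (𝓝 1) := by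
    simpa using ((tendsto_bracketPow_neg_two_cocompact.mono_left hl).const_sub 1).rpow_const
      (p := α / 2) (Or.inl (by norm_num))
  rw [← one_mul a₀]
  refine (hratio.mul ha).congr' ?_
  filter_upwards [hl (tendsto_norm_cocompact_atTop.eventually_gt_atTop 0)] with x hx
  have hsq : 1 - bracketPow (-2) x = ‖x‖ ^ 2 / (1 + ‖x‖ ^ 2) := by
    rw [bracketPow_neg_two]
    field_simp
    ring
  have hnorm : (‖x‖ ^ 2) ^ (α / 2) * ‖x‖ ^ (-α) = 1 := by
    rw [← Real.rpow_natCast, ← Real.rpow_mul hx.le, ← Real.rpow_add hx, Nat.cast_ofNat,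
      mul_div_cancel₀ α two_ne_zero, add_neg_cancel, Real.rpow_zero]
  rw [hsq, Real.div_rpow (by positivity) (by positivity), div_mul_eq_mul_div, ← mul_assoc, hnorm,
    one_mul, bracketPow, neg_div, Real.rpow_neg (by positivity)]
  ring

end Proper

variable [InnerProductSpace ℝ E] {F : Set E} {κ : ℝ}

lemma eventually_norm_fderiv_bracketPow_sq_le {q : ℝ} (hκ : 0 ≤ κ)
    (ha : Tendsto (fun x => bracketPow (-α) x * a x) l (𝓝 a₀)) (hq : κ * (2 + α) ^ 2 < q * a₀) :
    ∀ᶠ x in l, ‖fderiv ℝ (κ • bracketPow (2 + α)) x‖ ^ 2 ≤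
      q * (a x * (κ • bracketPow (2 + α)) x) := by
  filter_upwards [(ha.const_mul q).eventually_const_lt hq] with x hx
  have hinv : bracketPow α x * bracketPow (-α) x = 1 := by
    rw [← bracketPow_add, add_neg_cancel, bracketPow_zero]
  have hα : κ * (2 + α) ^ 2 * bracketPow α x ≤ q * a x :=
    calc κ * (2 + α) ^ 2 * bracketPow α x ≤ q * (bracketPow (-α) x * a x) * bracketPow α x :=
          mul_le_mul_of_nonneg_right hx.le (bracketPow_pos α x).le
      _ = q * a x * (bracketPow α x * bracketPow (-α) x) := by ring
      _ = q * a x := by rw [hinv, mul_one]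
  have hgrad := norm_fderiv_bracketPow_sq_le (2 + α) x
  rw [add_sub_cancel_left] at hgrad
  rw [fderiv_const_smul (contDiff_bracketPow _ (n := 1)).differentiable_one.differentiableAt,
    norm_smul, Real.norm_of_nonneg hκ, Pi.smul_apply, smul_eq_mul]
  calc (κ * ‖fderiv ℝ (bracketPow (2 + α)) x‖) ^ 2
      ≤ κ ^ 2 * ((2 + α) ^ 2 * bracketPow α x * bracketPow (2 + α) x) := by
        rw [mul_pow]
        gcongr
    _ = κ * (2 + α) ^ 2 * bracketPow α x * (κ * bracketPow (2 + α) x) := by ring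
    _ ≤ q * a x * (κ * bracketPow (2 + α) x) :=
        mul_le_mul_of_nonneg_right hα (mul_nonneg hκ (bracketPow_pos _ x).le)
    _ = q * (a x * (κ * bracketPow (2 + α) x)) := mul_assoc _ _ _

lemma exists_norm_fderiv_bracketPow_sq_le (hF : IsClosed F) (haF : ContinuousOn a F) (hκ : 0 ≤ κ)
    (ha : Tendsto (fun x => bracketPow (-α) x * a x) (cocompact E ⊓ 𝓟 F) (𝓝 a₀)) {q : ℝ}
    (hq : κ * (2 + α) ^ 2 < q * a₀) :
    ∃ M, 0 ≤ M ∧ ∀ x ∈ F, ‖fderiv ℝ (κ • bracketPow (2 + α)) x‖ ^ 2 ≤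
      q * (a x * (κ • bracketPow (2 + α)) x) + M := by
  have hP : ContDiff ℝ 1 (κ • bracketPow (2 + α) : E → ℝ) := (contDiff_bracketPow _).const_smul κ
  obtain ⟨M, hM, hMF⟩ := exists_nonneg_forall_le_of_eventually_nonpos hF
    (h := fun x => ‖fderiv ℝ (κ • bracketPow (2 + α)) x‖ ^ 2 -
      q * (a x * (κ • bracketPow (2 + α)) x))
    (((hP.continuous_fderiv one_ne_zero).norm.pow 2).continuousOn.sub
      ((haF.mul hP.continuous.continuousOn).const_mul q))
    ((eventually_norm_fderiv_bracketPow_sq_le hκ ha hq).mono fun x => sub_nonpos.2)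
  exact ⟨M, hM, fun x hx => sub_le_iff_le_add'.1 (hMF x hx)⟩

variable [FiniteDimensional ℝ E]

variable (E κ α) in
lemma tendsto_bracketPow_neg_mul_laplacian :
    Tendsto (fun x : E => bracketPow (-α) x * Δ (κ • bracketPow (2 + α) : E → ℝ) x)
      (cocompact E) (𝓝 (κ * ((2 + α) * (finrank ℝ E + α)))) := by
  have hlap (x : E) : bracketPow (-α) x * Δ (κ • bracketPow (2 + α) : E → ℝ) x =
      κ * ((2 + α) * (finrank ℝ E + α - α * bracketPow (-2) x)) := by
    have hinv : bracketPow (-α) x * bracketPow α x = 1 := by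
      rw [← bracketPow_add, neg_add_cancel, bracketPow_zero]
    rw [InnerProductSpace.laplacian_smul _ (contDiff_bracketPow _).contDiffAt,
      laplacian_bracketPow, smul_eq_mul, add_sub_cancel_left]
    linear_combination
      κ * ((2 + α) * (finrank ℝ E + α - α * bracketPow (-2) x)) * hinv
  rw [funext hlap]
  simpa using (((tendsto_bracketPow_neg_two_cocompact.const_mul α).const_sub
    (finrank ℝ E + α)).const_mul (2 + α)).const_mul κ

lemma exists_lipschitz_laplacian_bracketPow_add [Nontrivial E] (hF : IsClosed F)
    (haF : ContinuousOn a F) {c : ℝ} (hc : 0 < c) (hca : ∀ x ∈ F, c ≤ a x) (ha₀ : 0 < a₀)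
    (hκa : κ * ((2 + α) * (finrank ℝ E + α)) = a₀)
    (ha : Tendsto (fun x => bracketPow (-α) x * a x) (cocompact E ⊓ 𝓟 F) (𝓝 a₀)) {σ : ℝ}
    (hσ : 0 < σ) :
    ∃ (u : E → ℝ) (K : NNReal), ContDiff ℝ 2 u ∧ LipschitzWith K u ∧
      ∀ x ∈ F, |a x - (Δ (κ • bracketPow (2 + α) : E → ℝ) x + Δ u x)| ≤ 2 * σ * a x := by
  have hP : ContDiff ℝ 2 (κ • bracketPow (2 + α) : E → ℝ) := (contDiff_bracketPow _).const_smul κ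
  have hfar := eventually_abs_sub_le_mul (bracketPow_pos (-α)) ha
    (hκa ▸ (tendsto_bracketPow_neg_mul_laplacian E α κ).mono_left inf_le_left) ha₀ hσ
  obtain ⟨u, K, hu, huK, hlap⟩ := exists_laplacian_approx_of_eventually hF
    (haF.sub (continuous_laplacian hP).continuousOn) (mul_pos hσ hc)
    (fun x hx => mul_le_mul_of_nonneg_left (hca x hx) hσ.le) hfar
  refine ⟨u, K, hu, huK, fun x hx => ?_⟩
  rw [← sub_sub, mul_assoc]
  exact hlap x hx

end Asymptotics

section Perturbation

lemma sq_add_le_weighted (p k : ℝ) {τ : ℝ} (hτ : 0 < τ) :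
    (p + k) ^ 2 ≤ (1 + τ) * p ^ 2 + (1 + 1 / τ) * k ^ 2 := by
  have hsq : (1 + τ) * p ^ 2 + (1 + 1 / τ) * k ^ 2 - (p + k) ^ 2 = (τ * p - k) ^ 2 / τ := by
    field_simp
    ring
  have : 0 ≤ (τ * p - k) ^ 2 / τ := by positivity
  linarith

lemma exists_sq_add_le_mul {q q' c M : ℝ} (hq : 0 < q) (hqq' : q < q') (hc : 0 < c) (hM : 0 ≤ M)
    (k : ℝ) :
    ∃ τ μ, 0 < τ ∧ τ < 1 ∧ 0 ≤ μ ∧ ∀ p a P A, c ≤ a → p ^ 2 ≤ q * (a * P) + M →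
      (1 - τ) * P + μ ≤ A → (p + k) ^ 2 ≤ q' * (a * A) := by
  have hq' : 0 < q' := hq.trans hqq'
  obtain ⟨τ, hτ⟩ : ∃ τ, τ = (q' - q) / (q' + q) := ⟨_, rfl⟩
  have hτ0 : 0 < τ := hτ ▸ div_pos (sub_pos.2 hqq') (by positivity)
  have hτ1 : τ < 1 := by
    rw [hτ, div_lt_one (by positivity)]
    linarith
  have hτq : (1 + τ) * q = q' * (1 - τ) := by
    rw [hτ]
    field_simp
    ring
  obtain ⟨μ, hμ⟩ : ∃ μ, μ = ((1 + τ) * M + (1 + 1 / τ) * k ^ 2) / (q' * c) := ⟨_, rfl⟩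
  have hμ0 : 0 ≤ μ := by
    rw [hμ]
    positivity
  have hμc : (1 + τ) * M + (1 + 1 / τ) * k ^ 2 = q' * (c * μ) := by
    rw [hμ]
    field_simp
  refine ⟨τ, μ, hτ0, hτ1, hμ0, fun p a P A hca hp hA => ?_⟩
  have ha : 0 < a := hc.trans_le hca
  calc (p + k) ^ 2 ≤ (1 + τ) * p ^ 2 + (1 + 1 / τ) * k ^ 2 := sq_add_le_weighted p k hτ0
    _ ≤ (1 + τ) * (q * (a * P) + M) + (1 + 1 / τ) * k ^ 2 := by gcongr
    _ = q' * (a * ((1 - τ) * P) + c * μ) := by linear_combination a * P * hτq + hμc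
    _ ≤ q' * (a * ((1 - τ) * P) + a * μ) := by gcongr
    _ = q' * (a * ((1 - τ) * P + μ)) := by ring
    _ ≤ q' * (a * A) := by gcongr

variable {E : Type*} [NormedAddCommGroup E] {u : E → ℝ} {K : NNReal} {s : ℝ}

lemma exists_abs_le_mul_bracketPow_add (huK : LipschitzWith K u) (hs : 2 ≤ s) {δ : ℝ}
    (hδ : 0 < δ) : ∃ D, 0 ≤ D ∧ ∀ x, |u x| ≤ δ * bracketPow s x + D := by
  refine ⟨|u 0| + K ^ 2 / (4 * δ), by positivity, fun x => ?_⟩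
  have hlip : |u x| ≤ |u 0| + K * ‖x‖ := by
    have := huK.norm_sub_le x 0
    rw [sub_zero, Real.norm_eq_abs] at this
    linarith [abs_sub_abs_le_abs_sub (u x) (u 0)]
  have hamgm : K * ‖x‖ ≤ δ * ‖x‖ ^ 2 + K ^ 2 / (4 * δ) := by
    have hsq : δ * ‖x‖ ^ 2 + K ^ 2 / (4 * δ) - K * ‖x‖ = (2 * δ * ‖x‖ - K) ^ 2 / (4 * δ) := by
      field_simp
      ring
    have : 0 ≤ (2 * δ * ‖x‖ - K) ^ 2 / (4 * δ) := by positivity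
    linarith
  have hpow : δ * ‖x‖ ^ 2 ≤ δ * bracketPow s x := by
    gcongr
    linarith [bracketPow_mono hs x, bracketPow_two x]
  linarith

variable [NormedSpace ℝ E]

lemma exists_const_add_lipschitz_bounds {F : Set E} {a P : E → ℝ} {κ₁ κ₂ q q' c M : ℝ}
    (hs : 2 ≤ s) (hκ₁ : 0 < κ₁) (hP₁ : ∀ x, κ₁ * bracketPow s x ≤ P x)
    (hP₂ : ∀ x, P x ≤ κ₂ * bracketPow s x) (hP : Differentiable ℝ P) (hu : Differentiable ℝ u)
    (huK : LipschitzWith K u) (hc : 0 < c) (hca : ∀ x ∈ F, c ≤ a x) (hq : 0 < q) (hqq' : q < q')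
    (hM : 0 ≤ M) (hgrad : ∀ x ∈ F, ‖fderiv ℝ P x‖ ^ 2 ≤ q * (a x * P x) + M) :
    ∃ Λ A₁ A₂, 0 < A₁ ∧ 0 < A₂ ∧
      (∀ x, A₁ * bracketPow s x ≤ P x + u x + Λ ∧ P x + u x + Λ ≤ A₂ * bracketPow s x) ∧
      ∀ x ∈ F, ‖fderiv ℝ (fun y => P y + u y + Λ) x‖ ^ 2 ≤ q' * (a x * (P x + u x + Λ)) := by
  obtain ⟨τ, μ, hτ0, hτ1, hμ, hsq⟩ := exists_sq_add_le_mul hq hqq' hc hM K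
  obtain ⟨D, hD, huD⟩ := exists_abs_le_mul_bracketPow_add huK hs (mul_pos hτ0 hκ₁)
  have hκ : κ₁ ≤ κ₂ := le_of_mul_le_mul_right ((hP₁ 0).trans (hP₂ 0)) (bracketPow_pos s 0)
  refine ⟨D + μ, (1 - τ) * κ₁, κ₂ + τ * κ₁ + 2 * D + μ, mul_pos (sub_pos.2 hτ1) hκ₁,
    by have := hκ₁.trans_le hκ; positivity, fun x => ⟨?_, ?_⟩, fun x hx => ?_⟩
  · linarith [(abs_le.1 (huD x)).1, hP₁ x]
  · have hconst : 2 * D + μ ≤ (2 * D + μ) * bracketPow s x :=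
      le_mul_of_one_le_right (by positivity) (one_le_bracketPow (by linarith) x)
    linarith [(abs_le.1 (huD x)).2, hP₂ x]
  · have hnorm : ‖fderiv ℝ (fun y => P y + u y + (D + μ)) x‖ ≤ ‖fderiv ℝ P x‖ + K := by
      rw [fderiv_add_const, fderiv_fun_add (hP x) (hu x)]
      exact (norm_add_le _ _).trans (by gcongr; exact norm_fderiv_le_of_lipschitz ℝ huK)
    have hlower : (1 - τ) * P x + μ ≤ P x + u x + (D + μ) := by
      linarith [(abs_le.1 (huD x)).1, mul_le_mul_of_nonneg_left (hP₁ x) hτ0.le]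
    exact (pow_le_pow_left₀ (norm_nonneg _) hnorm 2).trans
      (hsq _ _ _ _ (hca x hx) (hgrad x hx) hlower)

end Perturbation

theorem stmt_14_general {E : Type*} [NormedAddCommGroup E] [InnerProductSpace ℝ E]
    [FiniteDimensional ℝ E] [Nontrivial E] {α a₀ ε : ℝ} (hα : 0 ≤ α) {F : Set E}
    (hF : IsClosed F) {a : E → ℝ} (ha : ContinuousOn a F) (hapos : ∀ x ∈ F, 0 < a x)
    (ha₀ : 0 < a₀) (halim : Tendsto (fun x => ‖x‖ ^ (-α) * a x) (cocompact E ⊓ 𝓟 F) (𝓝 a₀))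
    (hε : 0 < ε) :
    ∃ (A : E → ℝ) (A₁ A₂ : ℝ), ContDiff ℝ 2 A ∧ 0 < A₁ ∧ 0 < A₂ ∧
      (∀ x ∈ F, (1 - ε) * a x ≤ Δ A x ∧ Δ A x ≤ (1 + ε) * a x) ∧
      (∀ x, A₁ * bracketPow (2 + α) x ≤ A x ∧ A x ≤ A₂ * bracketPow (2 + α) x) ∧
      ∀ x ∈ F, ‖fderiv ℝ A x‖ ^ 2 ≤ ((2 + α) / (finrank ℝ E + α) + ε) * (a x * A x) := by
  have hd : (0 : ℝ) < finrank ℝ E := by exact_mod_cast finrank_pos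
  set r := (2 + α) / (finrank ℝ E + α) with hr
  have hr0 : 0 < r := by positivity
  obtain ⟨κ, hκ, hκa⟩ : ∃ κ, 0 < κ ∧ κ * ((2 + α) * (finrank ℝ E + α)) = a₀ :=
    ⟨a₀ / ((2 + α) * (finrank ℝ E + α)), by positivity, by field_simp⟩
  have hκr : κ * (2 + α) ^ 2 < (r + ε / 2) * a₀ := by
    have : κ * (2 + α) ^ 2 = r * a₀ := by
      rw [← hκa, hr]
      field_simp
    linarith [mul_pos (half_pos hε) ha₀]
  have hP : ContDiff ℝ 2 (κ • bracketPow (2 + α) : E → ℝ) := (contDiff_bracketPow _).const_smul κ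
  have hwa := tendsto_bracketPow_neg_mul inf_le_left halim
  obtain ⟨c, hc, hca⟩ := exists_pos_forall_le_of_eventually_le hF ha hapos (half_pos ha₀)
    (eventually_half_le_of_tendsto_bracketPow_neg_mul hα ha₀ hwa)
  obtain ⟨u, K, hu, huK, hlap⟩ := exists_lipschitz_laplacian_bracketPow_add hF ha hc hca ha₀ hκa
    hwa (half_pos hε)
  obtain ⟨M, hM, hgrad⟩ := exists_norm_fderiv_bracketPow_sq_le hF ha hκ.le hwa hκr
  obtain ⟨Λ, A₁, A₂, hA₁, hA₂, hbounds, hgradA⟩ := exists_const_add_lipschitz_bounds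
    (s := 2 + α) (q' := r + ε) (by linarith) hκ (fun _ => le_rfl) (fun _ => le_rfl)
    (hP.differentiable two_ne_zero) (hu.differentiable two_ne_zero) huK hc hca
    (add_pos hr0 (half_pos hε)) (by linarith) hM hgrad
  refine ⟨_, A₁, A₂, (hP.add hu).add contDiff_const, hA₁, hA₂, fun x hx => ?_, hbounds, hgradA⟩
  have hΔ := abs_le.1 (hlap x hx)
  rw [mul_div_cancel₀ ε two_ne_zero, ← laplacian_add_add_const hP hu Λ] at hΔ
  exact ⟨by linarith [hΔ.2], by linarith [hΔ.1]⟩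

/-- construction of the auxiliary function `A_ε` (Lemma 3.1 of the paper):
for every `ε ∈ (0,1)` there are `A ∈ C²(ℝ^N)` and `A₁, A₂ > 0` with
(i) `(1−ε)a ≤ ΔA ≤ (1+ε)a` on `Ω`;
(ii) `A₁⟨x⟩^{2+α} ≤ A(x) ≤ A₂⟨x⟩^{2+α}` on `ℝ^N`;
(iii) `|∇A|² ≤ ((2+α)/(N+α)+ε) a A` on `Ω`. -/
theorem stmt_14 (N : ℕ) (hN : 2 ≤ N) (α : ℝ) (hα : 0 < α)
    (Ω : Set (EuclideanSpace ℝ (Fin N))) (hΩopen : IsOpen Ω)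
    (hΩext : IsCompact Ωᶜ) (hΩbdry : HasSmoothBoundary Ω)
    (h0 : (0 : EuclideanSpace ℝ (Fin N)) ∉ closure Ω)
    (a : EuclideanSpace ℝ (Fin N) → ℝ) (ha : ContDiffOn ℝ 2 a (closure Ω))
    (hapos : ∀ x ∈ closure Ω, 0 < a x)
    (a₀ : ℝ) (ha₀ : 0 < a₀)
    (halim : Tendsto (fun x : EuclideanSpace ℝ (Fin N) => ‖x‖ ^ (-α) * a x)
      (cocompact (EuclideanSpace ℝ (Fin N))) (nhds a₀)) :
    ∀ ε ∈ Set.Ioo (0 : ℝ) 1,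
      ∃ (A : EuclideanSpace ℝ (Fin N) → ℝ) (A₁ A₂ : ℝ),
        ContDiff ℝ 2 A ∧ 0 < A₁ ∧ 0 < A₂ ∧
        (∀ x ∈ Ω, (1 - ε) * a x ≤ lap A x ∧ lap A x ≤ (1 + ε) * a x) ∧
        (∀ x, A₁ * (1 + ‖x‖ ^ 2) ^ ((2 + α) / 2) ≤ A x
            ∧ A x ≤ A₂ * (1 + ‖x‖ ^ 2) ^ ((2 + α) / 2)) ∧
        (∀ x ∈ Ω, ‖gradient A x‖ ^ 2 ≤ ((2 + α) / ((N : ℝ) + α) + ε) * (a x * A x)) := by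
  have : Nonempty (Fin N) := ⟨⟨0, by omega⟩⟩
  rintro ε ⟨hε, -⟩
  obtain ⟨A, A₁, A₂, hA, hA₁, hA₂, hlap, hbounds, hgrad⟩ := stmt_14_general hα.le
    isClosed_closure ha.continuousOn hapos ha₀ (halim.mono_left inf_le_left) hε
  simp only [finrank_euclideanSpace_fin] at hgrad
  refine ⟨A, A₁, A₂, hA, hA₁, hA₂, fun x hx => ?_, hbounds, fun x hx => ?_⟩
  · rw [lap_eq_laplacian hA]
    exact hlap x (subset_closure hx)
  · rw [gradient, LinearIsometryEquiv.norm_map]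
    exact hgrad x (subset_closure hx)
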